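/- (Non-stationary phase bound.) Let Z, X, Y > 0 with X ≥ 1 and Y ≥ X, and let constants C_j, D_a > 0 be given for all integers j, a ≥ 0. Let ω : ℝ → ℂ be smooth, supported in [Z, 2Z], with |ω^{(j)}(t)| ≤ C_j (X/Z)^j for all j ≥ 0 and all t. Let h : ℝ → ℝ be smooth with |h^{(a)}(t)| ≤ D_a Y/Z^a for all a ≥ 1 and all t ∈ [Z, 2Z], and |h′(t)| ≥ Y/Z for all t in the support of ω. Then for every A > 0 there is a constant C_A, depending only on A and the constants C_j, D_a, such that |∫_ℝ ω(t) e(h(t)) dt| ≤ C_A · Z · (Y/X)^{−A}. -/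

import Mathlib

/-!
The proof is repeated integration by parts. For an amplitude `f` supported where `h' ≠ 0`,
`∫ f e(h) = -(2πi)⁻¹ ∫ (f / h')' e(h)`, so it suffices to see that the operator `f ↦ (f / h')'`
gains a factor `X / Y`. The amplitudes are measured by the scale-invariant condition
`‖f^{(j)}‖ ≤ K j * M * (X / Z) ^ j`, where the sequence `K` depends only on the given constants
and the size `M` carries all the dependence on `X`, `Y`, `Z`.

Applying the Leibniz rule to `f = g h'` and solving for the top-order term bounds the derivatives
of `g = f / h'` recursively (`IsAmplitude.norm_iteratedDeriv_div_le`): the condition holds for `g`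
with size `M * (Z / Y)` and constants `quotConst K D`. Differentiating once multiplies the size by
`X / Z`, so `(f / h')'` has size `M * (X / Y)` (`IsAmplitude.deriv_div`). After `n` steps the
trivial bound for the integral over `[Z, 2Z]` gives `O(Z (X / Y) ^ n)`, and any `n ≥ A` suffices
because `X / Y ≤ 1`.

All pointwise estimates are made on the closed support `S` of `ω`, on which `|h'| ≥ Y / Z`
persists by continuity; off `S` the amplitudes vanish identically.
-/

open Complex Real MeasureTheory

/-- `e(x) = e^{2πix}`. -/
noncomputable def e (x : ℝ) : ℂ := Complex.exp (2 * Real.pi * Complex.I * x)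

/-- `h` is a smooth phase which on the closed set `S ⊆ [Z, 2Z]` satisfies
`|h^{(a)}| ≤ D a * Y / Z ^ a` for `a ≥ 1` and `|h'| ≥ Y / Z`. -/
structure IsPhase (D : ℕ → ℝ) (Z Y : ℝ) (S : Set ℝ) (h : ℝ → ℝ) : Prop where
  smooth : ContDiff ℝ (⊤ : ℕ∞) h
  closed : IsClosed S
  subset : S ⊆ Set.Icc Z (2 * Z)
  upper : ∀ a : ℕ, 1 ≤ a → ∀ t ∈ S, |iteratedDeriv a h t| ≤ D a * Y / Z ^ a
  lower : ∀ t ∈ S, Y / Z ≤ |deriv h t|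

/-- `f` is a smooth amplitude vanishing off `S`, of size `M` and varying at scale `Z / X`, with
implied constants `K j`. -/
structure IsAmplitude (K : ℕ → ℝ) (Z X M : ℝ) (S : Set ℝ) (f : ℝ → ℂ) : Prop where
  smooth : ContDiff ℝ (⊤ : ℕ∞) f
  vanish : ∀ t, t ∉ S → f t = 0
  bound : ∀ j : ℕ, ∀ t ∈ S, ‖iteratedDeriv j f t‖ ≤ K j * M * (X / Z) ^ j

/-- The implied constants for the derivatives of `f / h'`, given those `K` of `f` and `D` of `h`,
as produced by solving the Leibniz rule for `f = (f / h') * h'` recursively. -/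
noncomputable def quotConst (K D : ℕ → ℝ) : ℕ → ℝ
  | j => K j + ∑ i : Fin j, (j.choose i : ℝ) * quotConst K D i * D (j - i + 1)

lemma iteratedDeriv_ofReal_comp {u : ℝ → ℝ} (hu : ContDiff ℝ (⊤ : ℕ∞) u) (n : ℕ) :
    iteratedDeriv n (fun t => (u t : ℂ)) = fun t => ((iteratedDeriv n u t : ℝ) : ℂ) := by
  induction n with
  | zero => simp
  | succ n ih =>
    rw [iteratedDeriv_succ, ih, iteratedDeriv_succ]
    funext t
    have hd : Differentiable ℝ (iteratedDeriv n u) :=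
      hu.differentiable_iteratedDeriv n (by exact_mod_cast WithTop.coe_lt_top _)
    exact (hd t).hasDerivAt.ofReal_comp.deriv

lemma smooth_ofReal_deriv {h : ℝ → ℝ} (hh : ContDiff ℝ (⊤ : ℕ∞) h) :
    ContDiff ℝ (⊤ : ℕ∞) (fun t => ((deriv h t : ℝ) : ℂ)) :=
  Complex.ofRealCLM.contDiff.comp (contDiff_infty_iff_deriv.mp hh).2

section

variable {K D : ℕ → ℝ} {Z X Y M : ℝ} {S : Set ℝ} {h : ℝ → ℝ} {f : ℝ → ℂ}

lemma IsPhase.deriv_ne_zero (hp : IsPhase D Z Y S h) (hZ : 0 < Z) (hY : 0 < Y) {t : ℝ}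
    (ht : t ∈ S) : ((deriv h t : ℝ) : ℂ) ≠ 0 := by
  have h1 := hp.lower t ht
  have h2 : 0 < Y / Z := by positivity
  exact_mod_cast abs_pos.mp (h2.trans_le h1)

/-- Dividing by `h'` preserves smoothness: off `S` the quotient is locally zero, and on `S` the
denominator does not vanish. -/
lemma IsAmplitude.smooth_div (hf : IsAmplitude K Z X M S f) (hp : IsPhase D Z Y S h)
    (hZ : 0 < Z) (hY : 0 < Y) :
    ContDiff ℝ (⊤ : ℕ∞) (fun t => f t / ((deriv h t : ℝ) : ℂ)) := by
  rw [contDiff_iff_contDiffAt]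
  intro t
  by_cases ht : t ∈ S
  · simp only [div_eq_mul_inv]
    exact hf.smooth.contDiffAt.mul
      ((smooth_ofReal_deriv hp.smooth).contDiffAt.inv (hp.deriv_ne_zero hZ hY ht))
  · refine (contDiffAt_const (c := (0 : ℂ))).congr_of_eventuallyEq ?_
    filter_upwards [hp.closed.isOpen_compl.mem_nhds ht] with s hs
    simp [hf.vanish s hs]

lemma IsAmplitude.norm_iteratedDeriv_div_le (hf : IsAmplitude K Z X M S f)
    (hp : IsPhase D Z Y S h) (hZ : 0 < Z) (hX : 1 ≤ X) (hY : 0 < Y) (j : ℕ) (t : ℝ)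
    (ht : t ∈ S) :
    ‖iteratedDeriv j (fun t => f t / ((deriv h t : ℝ) : ℂ)) t‖ ≤
      quotConst K D j * (M * (Z / Y)) * (X / Z) ^ j := by
  have hg := hf.smooth_div hp hZ hY
  have hq := smooth_ofReal_deriv hp.smooth
  set g : ℝ → ℂ := fun t => f t / ((deriv h t : ℝ) : ℂ) with hgdef
  set q : ℝ → ℂ := fun t => ((deriv h t : ℝ) : ℂ) with hqdef
  have hfg : f = g * q := by
    funext s
    by_cases hs : s ∈ S
    · exact (div_mul_cancel₀ _ (hp.deriv_ne_zero hZ hY hs)).symm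
    · simp [hgdef, hf.vanish s hs]
  have hqn : ∀ k, ‖iteratedDeriv k q t‖ = |iteratedDeriv (k + 1) h t| := by
    intro k
    rw [hqdef, iteratedDeriv_ofReal_comp (contDiff_infty_iff_deriv.mp hp.smooth).2,
      iteratedDeriv_succ']
    simp
  induction j using Nat.strong_induction_on with
  | _ j ih =>
    have hL := iteratedDeriv_mul (n := j) (x := t)
      (hg.contDiffAt.of_le (by exact_mod_cast le_top))
      (hq.contDiffAt.of_le (by exact_mod_cast le_top))
    rw [← hfg, Finset.sum_range_succ] at hL
    -- Solve the Leibniz rule for the term with all derivatives on `g`.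
    have htop : iteratedDeriv j g t * q t = iteratedDeriv j f t - ∑ i ∈ Finset.range j,
        (j.choose i : ℂ) * iteratedDeriv i g t * iteratedDeriv (j - i) q t := by
      rw [hL]; simp
    have hterm : ∀ i ∈ Finset.range j,
        ‖(j.choose i : ℂ) * iteratedDeriv i g t * iteratedDeriv (j - i) q t‖ ≤
          ((j.choose i : ℝ) * quotConst K D i * D (j - i + 1)) * (M * (X / Z) ^ j) := by
      intro i hi
      have hij : i < j := Finset.mem_range.mp hi
      have h1 := ih i hij
      have h2 : ‖iteratedDeriv (j - i) q t‖ ≤ D (j - i + 1) * Y / Z ^ (j - i + 1) := by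
        rw [hqn]; exact hp.upper _ (by omega) t ht
      have hB : 0 ≤ quotConst K D i * (M * (Z / Y)) * (X / Z) ^ i := (norm_nonneg _).trans h1
      have hE : 0 ≤ D (j - i + 1) * Y / Z ^ (j - i + 1) := (norm_nonneg _).trans h2
      have hXk : (1 : ℝ) ≤ X ^ (j - i) := one_le_pow₀ hX
      obtain ⟨k, rfl⟩ := Nat.exists_eq_add_of_lt hij
      have hk : i + k + 1 - i = k + 1 := by omega
      rw [hk] at h2 hE hXk ⊢
      calc ‖((i + k + 1).choose i : ℂ) * iteratedDeriv i g t * iteratedDeriv (k + 1) q t‖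
          = ((i + k + 1).choose i : ℝ) *
            (‖iteratedDeriv i g t‖ * ‖iteratedDeriv (k + 1) q t‖) := by
            rw [norm_mul, norm_mul, Complex.norm_natCast, mul_assoc]
        _ ≤ ((i + k + 1).choose i : ℝ) * ((quotConst K D i * (M * (Z / Y)) * (X / Z) ^ i) *
              (D (k + 1 + 1) * Y / Z ^ (k + 1 + 1))) := by gcongr
        _ ≤ ((i + k + 1).choose i : ℝ) * ((quotConst K D i * (M * (Z / Y)) * (X / Z) ^ i) *
              (D (k + 1 + 1) * Y / Z ^ (k + 1 + 1))) * X ^ (k + 1) :=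
            le_mul_of_one_le_right (by positivity) hXk
        _ = _ := by
            simp only [div_pow]
            field_simp
            ring
    have hsum : ‖iteratedDeriv j g t * q t‖ ≤ quotConst K D j * (M * (X / Z) ^ j) := by
      rw [htop]
      calc _ ≤ ‖iteratedDeriv j f t‖ + ‖∑ i ∈ Finset.range j,
              (j.choose i : ℂ) * iteratedDeriv i g t * iteratedDeriv (j - i) q t‖ :=
            norm_sub_le _ _
        _ ≤ K j * M * (X / Z) ^ j + ∑ i ∈ Finset.range j,
              ((j.choose i : ℝ) * quotConst K D i * D (j - i + 1)) * (M * (X / Z) ^ j) :=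
            add_le_add (hf.bound j t ht) (norm_sum_le_of_le _ hterm)
        _ = _ := by
            rw [quotConst, ← Finset.sum_mul, Finset.sum_range]
            ring
    have hlow : Y / Z ≤ ‖q t‖ := by
      simpa [hqdef] using hp.lower t ht
    rw [norm_mul] at hsum
    have h3 : ‖iteratedDeriv j g t‖ * (Y / Z) ≤ quotConst K D j * (M * (X / Z) ^ j) :=
      (mul_le_mul_of_nonneg_left hlow (norm_nonneg _)).trans hsum
    rw [← le_div_iff₀ (by positivity)] at h3
    refine h3.trans_eq ?_
    field_simp

/-- One step of integration by parts multiplies the size of the amplitude by `X / Y`. -/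
lemma IsAmplitude.deriv_div (hf : IsAmplitude K Z X M S f) (hp : IsPhase D Z Y S h)
    (hZ : 0 < Z) (hX : 1 ≤ X) (hY : 0 < Y) :
    IsAmplitude (fun j => quotConst K D (j + 1)) Z X (M * (X / Y)) S
      (deriv fun t => f t / ((deriv h t : ℝ) : ℂ)) where
  smooth := (contDiff_infty_iff_deriv.mp (hf.smooth_div hp hZ hY)).2
  vanish t ht := by
    have h0 : (fun t => f t / ((deriv h t : ℝ) : ℂ)) =ᶠ[nhds t] fun _ => 0 := by
      filter_upwards [hp.closed.isOpen_compl.mem_nhds ht] with s hs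
      simp [hf.vanish s hs]
    rw [h0.deriv_eq, deriv_const]
  bound j t ht := by
    rw [← iteratedDeriv_succ']
    refine (hf.norm_iteratedDeriv_div_le hp hZ hX hY (j + 1) t ht).trans_eq ?_
    rw [pow_succ]
    field_simp

lemma hasDerivAt_e_comp (hh : ContDiff ℝ (⊤ : ℕ∞) h) (t : ℝ) :
    HasDerivAt (fun t => e (h t)) (e (h t) * (2 * π * I * ((deriv h t : ℝ) : ℂ))) t := by
  have h1 : HasDerivAt h (deriv h t) t :=
    (hh.differentiable (by simp) t).hasDerivAt
  exact (h1.ofReal_comp.const_mul (2 * π * I)).cexp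

lemma norm_e (x : ℝ) : ‖e x‖ = 1 := by
  have : (2 * π * I * x : ℂ) = ((2 * π * x : ℝ) : ℂ) * I := by push_cast; ring
  rw [e, this, Complex.norm_exp_ofReal_mul_I]

lemma IsAmplitude.integrable (hf : IsAmplitude K Z X M S f) (hp : IsPhase D Z Y S h) :
    Integrable fun t => f t * e (h t) := by
  have hc : Continuous fun t => e (h t) :=
    continuous_iff_continuousAt.mpr fun t => (hasDerivAt_e_comp hp.smooth t).continuousAt
  refine (hf.smooth.continuous.mul hc).integrable_of_hasCompactSupport ?_
  refine HasCompactSupport.intro (isCompact_Icc (a := Z) (b := 2 * Z)) fun t ht => ?_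
  simp [hf.vanish t fun hS => ht (hp.subset hS)]

/-- The integration by parts. The factor `1 / (2π) ≤ 1` is discarded. -/
lemma IsAmplitude.norm_integral_le (hf : IsAmplitude K Z X M S f) (hp : IsPhase D Z Y S h)
    (hZ : 0 < Z) (hX : 1 ≤ X) (hY : 0 < Y) :
    ‖∫ t, f t * e (h t)‖ ≤
      ‖∫ t, deriv (fun t => f t / ((deriv h t : ℝ) : ℂ)) t * e (h t)‖ := by
  have hg := hf.smooth_div hp hZ hY
  have hT := hf.deriv_div hp hZ hX hY
  set g : ℝ → ℂ := fun t => f t / ((deriv h t : ℝ) : ℂ) with hgdef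
  have hfg : ∀ t, g t * ((deriv h t : ℝ) : ℂ) = f t := by
    intro s
    by_cases hs : s ∈ S
    · exact div_mul_cancel₀ _ (hp.deriv_ne_zero hZ hY hs)
    · simp [hgdef, hf.vanish s hs]
  have hgi : Integrable fun t => g t * e (h t) := by
    have hga : IsAmplitude (quotConst K D) Z X (M * (Z / Y)) S g :=
      ⟨hg, fun t ht => by simp [hgdef, hf.vanish t ht],
        fun j t ht => hf.norm_iteratedDeriv_div_le hp hZ hX hY j t ht⟩
    exact hga.integrable hp
  have hd : ∀ t, HasDerivAt (fun t => g t * e (h t))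
      (deriv g t * e (h t) + 2 * π * I * (f t * e (h t))) t := by
    intro t
    have h1 : HasDerivAt g (deriv g t) t := (hg.differentiable (by simp) t).hasDerivAt
    refine (h1.mul (hasDerivAt_e_comp hp.smooth t)).congr_deriv ?_
    rw [← hfg t]
    ring
  have hi1 := hT.integrable hp
  have hi2 := (hf.integrable hp).const_mul (2 * π * I)
  have h0 := integral_eq_zero_of_hasDerivAt_of_integrable hd (hi1.add hi2) hgi
  rw [integral_add hi1 hi2, integral_const_mul] at h0
  have h1 := eq_neg_of_add_eq_zero_left h0
  rw [h1, norm_neg, norm_mul]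
  refine le_mul_of_one_le_left (norm_nonneg _) ?_
  have : ‖(2 * π * I : ℂ)‖ = 2 * π := by
    simp [abs_of_pos Real.pi_pos]
  rw [this]
  linarith [Real.pi_gt_three]

end

/-- The bound after `n` integrations by parts. -/
lemma exists_bound_pow (D : ℕ → ℝ) (n : ℕ) : ∀ K : ℕ → ℝ, ∃ C : ℝ, 0 ≤ C ∧
    ∀ (Z X Y M : ℝ) (S : Set ℝ) (h : ℝ → ℝ) (f : ℝ → ℂ), 0 < Z → 1 ≤ X → 0 < Y → 0 ≤ M →
      IsPhase D Z Y S h → IsAmplitude K Z X M S f →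
      ‖∫ t, f t * e (h t)‖ ≤ C * Z * (M * (X / Y) ^ n) := by
  induction n with
  | zero =>
    refine fun K => ⟨|K 0|, abs_nonneg _, ?_⟩
    intro Z X Y M S h f hZ hX hY hM hp hf
    have hpt : ∀ t ∈ Set.Icc Z (2 * Z), ‖f t * e (h t)‖ ≤ |K 0| * M := by
      intro t _
      rw [norm_mul, norm_e, mul_one]
      by_cases ht : t ∈ S
      · have h1 := hf.bound 0 t ht
        simp only [iteratedDeriv_zero, pow_zero, mul_one] at h1
        exact h1.trans (mul_le_mul_of_nonneg_right (le_abs_self _) hM)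
      · rw [hf.vanish t ht, norm_zero]
        positivity
    have h1 := norm_setIntegral_le_of_norm_le_const (μ := volume)
      (isCompact_Icc (a := Z) (b := 2 * Z)).measure_lt_top hpt
    rw [setIntegral_eq_integral_of_forall_compl_eq_zero (fun t ht => by
      simp [hf.vanish t fun hS => ht (hp.subset hS)])] at h1
    rw [Real.volume_real_Icc_of_le (by linarith)] at h1
    refine h1.trans_eq ?_
    ring
  | succ n ih =>
    intro K
    obtain ⟨C, hC, H⟩ := ih (fun j => quotConst K D (j + 1))
    refine ⟨C, hC, ?_⟩
    intro Z X Y M S h f hZ hX hY hM hp hf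
    refine (hf.norm_integral_le hp hZ hX hY).trans ?_
    refine (H Z X Y (M * (X / Y)) S h _ hZ hX hY (by positivity) hp
      (hf.deriv_div hp hZ hX hY)).trans_eq ?_
    ring

theorem nonstationary_phase (Cc Dd : ℕ → ℝ) (hCc : ∀ j, 0 < Cc j) (hDd : ∀ a, 0 < Dd a)
    (A : ℝ) (hA : 0 < A) :
    ∃ CA > 0, ∀ (Z X Y : ℝ), 0 < Z → 1 ≤ X → X ≤ Y →
      ∀ (ω : ℝ → ℂ) (h : ℝ → ℝ),
        ContDiff ℝ (⊤ : ℕ∞) ω → Function.support ω ⊆ Set.Icc Z (2 * Z) →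
        (∀ j : ℕ, ∀ t : ℝ, ‖iteratedDeriv j ω t‖ ≤ Cc j * (X / Z) ^ j) →
        ContDiff ℝ (⊤ : ℕ∞) h →
        (∀ a : ℕ, 1 ≤ a → ∀ t ∈ Set.Icc Z (2 * Z), |iteratedDeriv a h t| ≤ Dd a * Y / Z ^ a) →
        (∀ t ∈ Function.support ω, Y / Z ≤ |deriv h t|) →
        ‖∫ t : ℝ, ω t * e (h t)‖ ≤ CA * Z * (Y / X) ^ (-A) := by
  obtain ⟨C, hC, H⟩ := exists_bound_pow Dd ⌈A⌉₊ Cc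
  refine ⟨C + 1, by positivity, ?_⟩
  intro Z X Y hZ hX hXY ω h hω hsupp hωb hh hhb hlow
  have hX0 : 0 < X := by linarith
  have hY : 0 < Y := by linarith
  have hsub : tsupport ω ⊆ Set.Icc Z (2 * Z) := closure_minimal hsupp isClosed_Icc
  have hp : IsPhase Dd Z Y (tsupport ω) h :=
    { smooth := hh
      closed := isClosed_tsupport ω
      subset := hsub
      upper := fun a ha t ht => hhb a ha t (hsub ht)
      lower := by
        have hcl : IsClosed {t | Y / Z ≤ |deriv h t|} :=
          isClosed_le continuous_const (contDiff_infty_iff_deriv.mp hh).2.continuous.abs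
        exact fun t ht => closure_minimal hlow hcl ht }
  have hf : IsAmplitude Cc Z X 1 (tsupport ω) ω :=
    { smooth := hω
      vanish := fun t ht => image_eq_zero_of_notMem_tsupport ht
      bound := fun j t _ => by simpa using hωb j t }
  have h1 := H Z X Y 1 _ h ω hZ hX hY zero_le_one hp hf
  have h2 : (X / Y) ^ ⌈A⌉₊ ≤ (Y / X) ^ (-A) := by
    rw [Real.rpow_neg (by positivity), ← Real.inv_rpow (by positivity), inv_div,
      ← Real.rpow_natCast]
    exact Real.rpow_le_rpow_of_exponent_ge (by positivity) ((div_le_one hY).mpr hXY)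
      (Nat.le_ceil A)
  calc ‖∫ t : ℝ, ω t * e (h t)‖ ≤ C * Z * (1 * (X / Y) ^ ⌈A⌉₊) := h1
    _ ≤ (C + 1) * Z * (Y / X) ^ (-A) := by
        rw [one_mul]
        gcongr
        linarith
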